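/- Fix x ∈ ℝ, and let F_n(x) = Φ(h_n)^{n} − (1 − Φ(h_n))^{n} where h_n = (c_n x + d_n)^{1/2}, with c_n = 2 − 2b_n^{−2} and d_n = b_n² − 2b_n^{−2}, defined for n large enough that c_n x + d_n > 0; F_n(x) equals the probability P(M_n² ≤ c_n x + d_n) for the maximum M_n of n independent standard normal random variables. Then as n → ∞, F_n(x) = Λ(x) + b_n^{−4} Λ(x) e^{−x} ( k₁ + b_n^{−2} k₂ + O(b_n^{−4}) ), where k₁ = −(7/2 + 3x + x²) and k₂ = 43/3 + 14x + 6x² + (4/3) x³; that is, there exist C > 0 and N such that for all n ≥ N, |F_n(x) − Λ(x) − b_n^{−4} Λ(x) e^{−x} k₁ − b_n^{−6} Λ(x) e^{−x} k₂| ≤ C b_n^{−8}. -/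

import Mathlib

open Real Filter Topology

/-- The standard normal distribution function. -/
noncomputable def stdNormalCDF (x : ℝ) : ℝ :=
  ∫ u in Set.Iic x, Real.exp (-u ^ 2 / 2) / Real.sqrt (2 * Real.pi)

/-- The Gumbel distribution function `Λ(x) = exp(−e^{−x})`. -/
noncomputable def gumbel (x : ℝ) : ℝ := Real.exp (-Real.exp (-x))

open Asymptotics


theorem log3 : (fun t : ℝ => log (1 + t) - (t - t ^ 2 / 2 + t ^ 3 / 3)) =O[𝓝 0] fun t => t ^ 4 := by
  refine IsBigO.of_bound 2 ?_
  have : ∀ᶠ t : ℝ in 𝓝 0, |t| < 1 / 2 := by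
    have := Metric.ball_mem_nhds (0 : ℝ) (show (0:ℝ) < 1 / 2 by norm_num)
    filter_upwards [this] with t ht
    simpa using ht
  filter_upwards [this] with t ht
  have h := Real.abs_log_sub_add_sum_range_le (x := -t) (by rw [abs_neg]; linarith) 3
  rw [abs_neg] at h
  norm_num [Finset.sum_range_succ] at h
  rw [Real.norm_eq_abs, Real.norm_eq_abs, abs_pow]
  have h2 : |log (1 + t) - (t - t ^ 2 / 2 + t ^ 3 / 3)| ≤ |t| ^ 4 / (1 - |t|) := by
    convert h using 2
    ring
  refine h2.trans ?_
  rw [div_le_iff₀ (by linarith)]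
  have : 0 ≤ |t| ^ 4 := by positivity
  nlinarith

theorem lemmaA (x : ℝ) : (fun s : ℝ => (1 + x) * s - log (1 + (2 * x * s - 2 * (1 + x) * s ^ 2)) / 2
    + log (1 + (-(s / (1 + (2 * x * s - 2 * (1 + x) * s ^ 2))) + 3 * (s / (1 + (2 * x * s - 2 * (1 + x) * s ^ 2))) ^ 2
      - 15 * (s / (1 + (2 * x * s - 2 * (1 + x) * s ^ 2))) ^ 3))
    - ((7 / 2 + 3 * x + x ^ 2) * s ^ 2 - (43 / 3 + 14 * x + 6 * x ^ 2 + 4 / 3 * x ^ 3) * s ^ 3))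
    =O[𝓝 0] fun s => s ^ 4 := by
  set w : ℝ → ℝ := fun s => 2 * x * s - 2 * (1 + x) * s ^ 2 with hw
  set u : ℝ → ℝ := fun s => s / (1 + w s) with hu
  set m : ℝ → ℝ := fun s => -(u s) + 3 * u s ^ 2 - 15 * u s ^ 3 with hm
  set v : ℝ → ℝ := fun s => 2 * x - 2 * (1 + x) * s with hv
  have hpoly : ∀ R : ℝ → ℝ, ContinuousAt R 0 → (fun s : ℝ => s ^ 4 * R s) =O[𝓝 0] fun s => s ^ 4 := by
    intro R hR
    have := (isBigO_refl (fun s : ℝ => s ^ 4) (𝓝 0)).mul (hR.tendsto.isBigO_one ℝ)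
    simpa using this
  have hwc : Continuous w := by fun_prop
  have hw0 : w 0 = 0 := by simp [hw]
  have hne : ∀ᶠ s in 𝓝 0, 1 + w s ≠ 0 := by
    have : ContinuousAt (fun s => 1 + w s) 0 := by fun_prop
    exact this.eventually_ne (by simp [hw0])
  have huc : ContinuousAt u 0 := by
    apply ContinuousAt.div <;> first | fun_prop | simp [hw0]
  have hu0 : u 0 = 0 := by simp [hu]
  have hmc : ContinuousAt m 0 := by fun_prop
  have hm0 : m 0 = 0 := by simp [hm, hu0]
  have hwO : w =O[𝓝 0] fun s => s := by
    have := (isBigO_refl (fun s : ℝ => s) (𝓝 0)).mul ((show Continuous v by fun_prop).continuousAt.tendsto.isBigO_one ℝ (l := 𝓝 0))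
    simp only [mul_one] at this
    refine this.congr_left fun s => ?_
    simp only [hw, hv]; ring
  have hDc : ContinuousAt (fun s => 1 / (1 + w s)) 0 := by
    apply ContinuousAt.div <;> first | fun_prop | simp [hw0]
  have huO : u =O[𝓝 0] fun s => s := by
    have := (isBigO_refl (fun s : ℝ => s) (𝓝 0)).mul (hDc.tendsto.isBigO_one ℝ)
    simp only [mul_one] at this
    refine this.congr_left fun s => ?_
    simp only [hu]; ring
  have hmO : m =O[𝓝 0] fun s => s := by
    have h1 : (fun s => -1 + 3 * u s - 15 * u s ^ 2) =O[𝓝 0] fun _ => (1:ℝ) :=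
      (show ContinuousAt (fun s => -1 + 3 * u s - 15 * u s ^ 2) 0 by fun_prop).tendsto.isBigO_one ℝ
    have := huO.mul h1
    simp only [mul_one] at this
    refine this.congr_left fun s => ?_
    simp only [hm]; ring
  have e1 : (fun s => log (1 + w s) - (w s - w s ^ 2 / 2 + w s ^ 3 / 3)) =O[𝓝 0] fun s => s ^ 4 := by
    have : Tendsto w (𝓝 0) (𝓝 0) := by simpa [hw0] using hwc.tendsto 0
    exact (log3.comp_tendsto this).trans (hwO.pow 4)
  have e2 : (fun s => log (1 + m s) - (m s - m s ^ 2 / 2 + m s ^ 3 / 3)) =O[𝓝 0] fun s => s ^ 4 := by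
    have : Tendsto m (𝓝 0) (𝓝 0) := by simpa [hm0] using hmc.tendsto
    exact (log3.comp_tendsto this).trans (hmO.pow 4)
  have e3 : (fun s => (m s - m s ^ 2 / 2 + m s ^ 3 / 3) - (-u s + 5 / 2 * u s ^ 2 - 37 / 3 * u s ^ 3)) =O[𝓝 0] fun s => s ^ 4 := by
    have h1 : (fun s => ((m s - m s ^ 2 / 2 + m s ^ 3 / 3) - (-u s + 5 / 2 * u s ^ 2 - 37 / 3 * u s ^ 3))) =O[𝓝 0] fun s => u s ^ 4 := by
      have hR : ContinuousAt (fun s => -(39 - 90 * u s + 225 * u s ^ 2) / 2 + (3 * (3 - 15 * u s) - 3 * (3 - 15 * u s) ^ 2 * u s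
        + (3 - 15 * u s) ^ 3 * u s ^ 2) / 3) 0 := by fun_prop
      have := (isBigO_refl (fun s : ℝ => u s ^ 4) (𝓝 0)).mul (hR.tendsto.isBigO_one ℝ)
      simp only [mul_one] at this
      refine this.congr_left fun s => ?_
      simp only [hm]; ring
    exact h1.trans (huO.pow 4)
  have e4 : (fun s => u s - (s - s ^ 2 * v s + s ^ 3 * v s ^ 2)) =O[𝓝 0] fun s => s ^ 4 := by
    refine (hpoly (fun s => -(v s) ^ 3 * (1 / (1 + w s))) ?_).congr' ?_ EventuallyEq.rfl
    · exact ContinuousAt.mul (by fun_prop) hDc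
    · filter_upwards [hne] with s hs
      have : w s = s * v s := by simp only [hw, hv]; ring
      simp only [hu]
      rw [this] at hs ⊢
      field_simp
      ring
  set U : ℝ → ℝ := fun s => s - s ^ 2 * v s + s ^ 3 * v s ^ 2 with hU
  have hUc : ContinuousAt U 0 := by fun_prop
  have e5 : (fun s => (-u s + 5 / 2 * u s ^ 2 - 37 / 3 * u s ^ 3) - (-U s + 5 / 2 * U s ^ 2 - 37 / 3 * U s ^ 3)) =O[𝓝 0] fun s => s ^ 4 := by
    have hR : ContinuousAt (fun s => -1 + 5 / 2 * (u s + U s) - 37 / 3 * (u s ^ 2 + u s * U s + U s ^ 2)) 0 := by fun_prop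
    have := e4.mul (hR.tendsto.isBigO_one ℝ)
    simp only [mul_one] at this
    refine this.congr_left fun s => ?_
    ring
  have e6 : (fun s => (1 + x) * s - (w s - w s ^ 2 / 2 + w s ^ 3 / 3) / 2 + (-U s + 5 / 2 * U s ^ 2 - 37 / 3 * U s ^ 3)
     - ((7 / 2 + 3 * x + x ^ 2) * s ^ 2 - (43 / 3 + 14 * x + 6 * x ^ 2 + 4 / 3 * x ^ 3) * s ^ 3)) =O[𝓝 0] fun s => s ^ 4 := by
    set a : ℝ := 2 * x with ha
    set c : ℝ := - 2 * (1 + x) with hc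
    set q : ℝ → ℝ := fun s => -v s + s * v s ^ 2 with hq
    refine (hpoly (fun s => c ^ 2 / 4 - (3 * a ^ 2 * c + 3 * a * c ^ 2 * s + c ^ 3 * s ^ 2) / 6 - (2 * a * c + c ^ 2 * s)
      + 5 / 2 * (2 * v s ^ 2 + q s ^ 2 - 2 * c) - 37 / 3 * (3 * q s + 3 * s * q s ^ 2 + s ^ 2 * q s ^ 3)) ?_).congr_left fun s => ?_
    · exact Continuous.continuousAt (by fun_prop)
    · simp only [hq, hU, hw, hv, ha, hc]; ring
  have := (((e1.const_mul_left (-1 / 2)).add e2).add (e3.add e5)).add e6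
  refine this.congr_left fun s => ?_
  ring

noncomputable def phi (u : ℝ) : ℝ := Real.exp (-u ^ 2 / 2) / Real.sqrt (2 * Real.pi)

theorem phi_pos (t : ℝ) : 0 < phi t := by unfold phi; positivity

theorem phi_cont : Continuous phi := by
  unfold phi
  fun_prop

theorem phi_int : MeasureTheory.Integrable phi := by
  have := (integrable_exp_neg_mul_sq (show (0:ℝ) < 1 / 2 by norm_num)).div_const (Real.sqrt (2 * Real.pi))
  refine this.congr (Filter.Eventually.of_forall fun u => ?_)
  simp only [phi]
  congr 2
  ring

theorem phi_total : ∫ u, phi u = 1 := by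
  have h := integral_gaussian (1 / 2)
  have : ∀ u : ℝ, phi u = Real.exp (-(1 / 2) * u ^ 2) / Real.sqrt (2 * Real.pi) := by
    intro u
    simp only [phi]
    congr 2
    ring
  simp_rw [this]
  rw [MeasureTheory.integral_div, h, show π / (1 / 2) = 2 * π by ring]
  exact div_self (by positivity)

theorem cdf_deriv (t : ℝ) : HasDerivAt stdNormalCDF (phi t) t := by
  have h1 : ∀ t, stdNormalCDF t = (∫ u in (0:ℝ)..t, phi u) + stdNormalCDF 0 := by
    intro t
    have := intervalIntegral.integral_Iic_sub_Iic (a := 0) (b := t) (f := phi) phi_int.integrableOn phi_int.integrableOn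
    rw [← this]
    simp [stdNormalCDF, phi]
  rw [show stdNormalCDF = fun t => (∫ u in (0:ℝ)..t, phi u) + stdNormalCDF 0 from funext h1]
  exact (phi_cont.integral_hasStrictDerivAt 0 t).hasDerivAt.add_const _

theorem cdf_tendsto : Tendsto stdNormalCDF atTop (𝓝 1) := by
  have := MeasureTheory.tendsto_setIntegral_of_monotone (s := fun t : ℝ => Set.Iic t) (f := phi)
    (μ := MeasureTheory.volume) (fun _ => measurableSet_Iic) (fun a b hab => Set.Iic_subset_Iic.2 hab) phi_int.integrableOn
  rw [Set.iUnion_Iic, MeasureTheory.setIntegral_univ, phi_total] at this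
  exact this

theorem phi_deriv (t : ℝ) : HasDerivAt phi (-t * phi t) t := by
  have h : HasDerivAt (fun u : ℝ => -u ^ 2 / 2) (-t) t := by
    have := ((hasDerivAt_pow 2 t).neg).div_const 2
    refine this.congr_deriv ?_
    norm_num
    ring
  have := h.exp.div_const (Real.sqrt (2 * Real.pi))
  refine this.congr_deriv ?_
  simp only [phi]; ring

theorem nonneg_of_deriv {f f' : ℝ → ℝ} (hf : ∀ t, 0 < t → HasDerivAt f (f' t) t)
    (hf' : ∀ t, 0 < t → f' t ≤ 0) (hlim : Tendsto f atTop (𝓝 0)) (t : ℝ) (ht : 0 < t) : 0 ≤ f t := by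
  have hanti : AntitoneOn f (Set.Ioi 0) := by
    refine antitoneOn_of_deriv_nonpos (convex_Ioi 0) (fun y hy => (hf y hy).continuousAt.continuousWithinAt) ?_ ?_
    · rw [interior_Ioi]
      exact fun y hy => (hf y hy).differentiableAt.differentiableWithinAt
    · rw [interior_Ioi]
      intro y hy
      rw [(hf y hy).deriv]
      exact hf' y hy
  refine le_of_tendsto hlim ?_
  filter_upwards [eventually_ge_atTop t] with y hy
  exact hanti ht (ht.trans_le hy) hy

theorem phi_tendsto : Tendsto phi atTop (𝓝 0) := by
  unfold phi
  have h : Tendsto (fun u : ℝ => -u ^ 2 / 2) atTop atBot := by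
    have : Tendsto (fun u : ℝ => u ^ 2 / 2) atTop atTop :=
      (tendsto_pow_atTop (by norm_num)).atTop_div_const (by norm_num)
    refine (tendsto_neg_atTop_atBot.comp this).congr fun u => ?_
    simp only [Function.comp]; ring
  simpa using (tendsto_exp_atBot.comp h).div_const (Real.sqrt (2 * Real.pi))

theorem inv_deriv (k : ℕ) (t : ℝ) (ht : 0 < t) :
    HasDerivAt (fun t : ℝ => phi t * (t⁻¹) ^ (k + 1)) (- phi t * (t⁻¹) ^ k - (k + 1) * phi t * (t⁻¹) ^ (k + 2)) t := by
  have := (phi_deriv t).mul ((hasDerivAt_inv ht.ne').fun_pow (k + 1))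
  refine this.congr_deriv ?_
  push_cast
  have hq : t * t⁻¹ = 1 := mul_inv_cancel₀ ht.ne'
  rw [← inv_pow]
  generalize t⁻¹ = q at hq ⊢
  linear_combination (-phi t * q ^ k) * hq

theorem inv_lim (k : ℕ) : Tendsto (fun t : ℝ => phi t * (t⁻¹) ^ (k + 1)) atTop (𝓝 0) := by
  simpa using phi_tendsto.mul ((tendsto_inv_atTop_zero (𝕜 := ℝ)).pow (k + 1))

theorem mills (t : ℝ) (ht : 0 < t) :
    0 ≤ (1 - stdNormalCDF t) - phi t * t⁻¹ * (1 - (t⁻¹) ^ 2 + 3 * (t⁻¹) ^ 4 - 15 * (t⁻¹) ^ 6) ∧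
    (1 - stdNormalCDF t) - phi t * t⁻¹ * (1 - (t⁻¹) ^ 2 + 3 * (t⁻¹) ^ 4 - 15 * (t⁻¹) ^ 6) ≤
      phi t * t⁻¹ * (105 * (t⁻¹) ^ 8) := by
  have hQ : Tendsto (fun t => 1 - stdNormalCDF t) atTop (𝓝 0) := by
    simpa using cdf_tendsto.const_sub 1
  have hQ' : ∀ t, HasDerivAt (fun t => 1 - stdNormalCDF t) (-phi t) t := fun t => (cdf_deriv t).const_sub 1
  constructor
  · have := nonneg_of_deriv (f := fun t => (1 - stdNormalCDF t) - (phi t * (t⁻¹) ^ (0 + 1) - phi t * (t⁻¹) ^ (2 + 1)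
       + 3 * (phi t * (t⁻¹) ^ (4 + 1)) - 15 * (phi t * (t⁻¹) ^ (6 + 1)))) (fun t ht => (hQ' t).sub
       ((((inv_deriv 0 t ht).sub (inv_deriv 2 t ht)).add ((inv_deriv 4 t ht).const_mul 3)).sub ((inv_deriv 6 t ht).const_mul 15)))
       ?_ ?_ t ht
    · convert this using 1
      ring
    · intro t ht
      have h1 := phi_pos t
      have h2 : 0 ≤ phi t * t⁻¹ ^ 8 := by positivity
      push_cast
      nlinarith
    · simpa using hQ.sub ((((inv_lim 0).sub (inv_lim 2)).add ((inv_lim 4).const_mul 3)).sub ((inv_lim 6).const_mul 15))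
  · have := nonneg_of_deriv (f := fun t => (phi t * (t⁻¹) ^ (0 + 1) - phi t * (t⁻¹) ^ (2 + 1)
       + 3 * (phi t * (t⁻¹) ^ (4 + 1)) - 15 * (phi t * (t⁻¹) ^ (6 + 1)) + 105 * (phi t * (t⁻¹) ^ (8 + 1))) - (1 - stdNormalCDF t)) (fun t ht => 
       (((((inv_deriv 0 t ht).sub (inv_deriv 2 t ht)).add ((inv_deriv 4 t ht).const_mul 3)).sub ((inv_deriv 6 t ht).const_mul 15)).add
        ((inv_deriv 8 t ht).const_mul 105)).sub (hQ' t))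
       ?_ ?_ t ht
    · rw [← sub_nonneg]
      convert this using 1
      ring
    · intro t ht
      have h1 := phi_pos t
      have h2 : 0 ≤ phi t * t⁻¹ ^ 10 := by positivity
      push_cast
      nlinarith
    · simpa using (((((inv_lim 0).sub (inv_lim 2)).add ((inv_lim 4).const_mul 3)).sub ((inv_lim 6).const_mul 15)).add ((inv_lim 8).const_mul 105)).sub hQ

theorem cdf_nonneg (t : ℝ) : 0 ≤ stdNormalCDF t :=
  MeasureTheory.setIntegral_nonneg measurableSet_Iic fun u _ => (phi_pos u).le

theorem cdf_le_one (t : ℝ) : stdNormalCDF t ≤ 1 := by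
  rw [← phi_total]
  exact MeasureTheory.setIntegral_le_integral phi_int (Filter.Eventually.of_forall fun u => (phi_pos u).le)

theorem exp2 : (fun z : ℝ => exp z - 1 - z) =O[𝓝 0] fun z => z ^ 2 := by
  refine IsBigO.of_bound 1 ?_
  have := Metric.ball_mem_nhds (0 : ℝ) (show (0:ℝ) < 1 by norm_num)
  filter_upwards [this] with t ht
  have ht : |t| < 1 := by simpa using ht
  rw [one_mul, Real.norm_eq_abs, Real.norm_eq_abs, abs_pow, sq_abs]
  exact Real.abs_exp_sub_one_sub_id_le ht.le

theorem exactB (b n x s W h : ℝ) (hb : 0 < b) (hn : 0 ≤ n) (he : 2 * π * b ^ 2 * exp (b ^ 2) = n ^ 2)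
    (hs : s = 1 / b ^ 2) (hW : W = 2 * x * s - 2 * (1 + x) * s ^ 2) (hpos : 0 < 1 + W)
    (hh : h = √(b ^ 2 * (1 + W))) :
    n * (phi h * h⁻¹) = exp (-x) * exp ((1 + x) * s - log (1 + W) / 2) := by
  have hn' : n = √(2 * π) * b * exp (b ^ 2 / 2) := by
    refine (pow_left_inj₀ hn (by positivity) two_ne_zero).1 ?_
    rw [← he, mul_pow, mul_pow, Real.sq_sqrt (by positivity), ← Real.exp_nat_mul]
    congr 2
    push_cast; ring
  have hr : √(1 + W) = exp (log (1 + W) / 2) := by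
    rw [Real.exp_half, Real.exp_log hpos]
  have hh' : h = b * exp (log (1 + W) / 2) := by
    rw [hh, Real.sqrt_mul (by positivity), Real.sqrt_sq hb.le, hr]
  have hsq : h ^ 2 = b ^ 2 * (1 + W) := by
    rw [hh, Real.sq_sqrt (by positivity)]
  have hp : phi h = exp (-(b ^ 2 / 2)) * exp (-x) * exp ((1 + x) * s) / √(2 * π) := by
    unfold phi
    rw [← Real.exp_add, ← Real.exp_add, neg_div, hsq, hW, hs]
    congr 2
    field_simp
    ring
  rw [hp, hn', hh', Real.exp_sub, Real.exp_neg (b ^ 2 / 2)]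
  have : √(2 * π) ≠ 0 := by positivity
  field_simp

theorem lemmaD (x : ℝ) : ∃ C > 0, ∀ᶠ s : ℝ in 𝓝 0, ∀ W u : ℝ, W = 2 * x * s - 2 * (1 + x) * s ^ 2 → u = s / (1 + W) →
    0 < 1 + W ∧
    |exp ((1 + x) * s - log (1 + W) / 2) * (1 - u + 3 * u ^ 2 - 15 * u ^ 3)
      - (1 + ((7 / 2 + 3 * x + x ^ 2) * s ^ 2 - (43 / 3 + 14 * x + 6 * x ^ 2 + 4 / 3 * x ^ 3) * s ^ 3))| ≤ C * s ^ 4 ∧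
    exp ((1 + x) * s - log (1 + W) / 2) * (105 * u ^ 4) ≤ C * s ^ 4 := by
  have hA := lemmaA x
  set w : ℝ → ℝ := fun s => 2 * x * s - 2 * (1 + x) * s ^ 2 with hw
  set u : ℝ → ℝ := fun s => s / (1 + w s) with hu
  set m : ℝ → ℝ := fun s => -(u s) + 3 * u s ^ 2 - 15 * u s ^ 3 with hm
  set L : ℝ → ℝ := fun s => (1 + x) * s - log (1 + w s) / 2 + log (1 + m s) with hL
  set P : ℝ → ℝ := fun s => (7 / 2 + 3 * x + x ^ 2) * s ^ 2 - (43 / 3 + 14 * x + 6 * x ^ 2 + 4 / 3 * x ^ 3) * s ^ 3 with hP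
  have hA : (fun s => L s - P s) =O[𝓝 0] fun s => s ^ 4 := hA
  have hwc : Continuous w := by fun_prop
  have hw0 : w 0 = 0 := by simp [hw]
  have hpos : ∀ᶠ s in 𝓝 0, 0 < 1 + w s := by
    have : ContinuousAt (fun s => 1 + w s) 0 := by fun_prop
    exact this.eventually (lt_mem_nhds (by simp [hw0]))
  have huc : ContinuousAt u 0 := by
    apply ContinuousAt.div <;> first | fun_prop | simp [hw0]
  have hu0 : u 0 = 0 := by simp [hu]
  have hmc : ContinuousAt m 0 := by fun_prop
  have hm0 : m 0 = 0 := by simp [hm, hu0]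
  have hmpos : ∀ᶠ s in 𝓝 0, 0 < 1 + m s := by
    have : ContinuousAt (fun s => 1 + m s) 0 := by fun_prop
    exact this.eventually (lt_mem_nhds (by simp [hm0]))
  have hlw : ContinuousAt (fun s => log (1 + w s)) 0 :=
    ContinuousAt.log (by fun_prop) (by simp [hw0])
  have hlm : ContinuousAt (fun s => log (1 + m s)) 0 :=
    ContinuousAt.log (by fun_prop) (by simp [hm0])
  have hLc : ContinuousAt L 0 := by fun_prop
  have hL0 : Tendsto L (𝓝 0) (𝓝 0) := by
    have := hLc.tendsto
    simpa [hL, hm0, hw0] using this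
  have h42 : (fun s : ℝ => s ^ 4) =O[𝓝 0] fun s => s ^ 2 := by
      have := (isBigO_refl (fun s : ℝ => s ^ 2) (𝓝 0)).mul ((show Continuous (fun s : ℝ => s ^ 2) by fun_prop).continuousAt.tendsto.isBigO_one ℝ (l := 𝓝 0))
      simp only [mul_one] at this
      exact this.congr_left fun s => by ring
  have hP2 : P =O[𝓝 0] fun s => s ^ 2 := by
    have := (isBigO_refl (fun s : ℝ => s ^ 2) (𝓝 0)).mul ((show Continuous (fun s : ℝ => (7 / 2 + 3 * x + x ^ 2) - (43 / 3 + 14 * x + 6 * x ^ 2 + 4 / 3 * x ^ 3) * s) by fun_prop).continuousAt.tendsto.isBigO_one ℝ (l := 𝓝 0))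
    simp only [mul_one] at this
    exact this.congr_left fun s => by simp only [hP]; ring
  have hL2 : L =O[𝓝 0] fun s => s ^ 2 := by
    refine ((hA.trans h42).add hP2).congr_left fun s => by ring
  have hE : (fun s => exp (L s) - 1 - L s) =O[𝓝 0] fun s => s ^ 4 := by
    have := (exp2.comp_tendsto hL0).trans (hL2.pow 2)
    refine this.congr (fun s => rfl) fun s => by ring
  have hT := hE.add hA
  obtain ⟨C1, hC1, hB1⟩ := hT.exists_pos
  have hV : (fun s => exp ((1 + x) * s - log (1 + w s) / 2) * (105 * u s ^ 4)) =O[𝓝 0] fun s => s ^ 4 := by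
    have hc : ContinuousAt (fun s => exp ((1 + x) * s - log (1 + w s) / 2) * 105 * (1 / (1 + w s)) ^ 4) 0 := by
      have : ContinuousAt (fun s => 1 / (1 + w s)) 0 := by
        apply ContinuousAt.div <;> first | fun_prop | simp [hw0]
      fun_prop
    have := (isBigO_refl (fun s : ℝ => s ^ 4) (𝓝 0)).mul (hc.tendsto.isBigO_one ℝ)
    simp only [mul_one] at this
    exact this.congr_left fun s => by simp only [hu]; ring
  obtain ⟨C2, hC2, hB2⟩ := hV.exists_pos
  refine ⟨C1 + C2, by positivity, ?_⟩
  filter_upwards [hpos, hmpos, hB1.bound, hB2.bound] with s h1 h2 h3 h4 W u' hW hu'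
  have hWw : W = w s := hW
  subst hWw
  have huu : u' = u s := hu'
  subst huu
  rw [Real.norm_eq_abs, Real.norm_eq_abs, abs_of_nonneg (show 0 ≤ s ^ 4 by positivity)] at h3 h4
  have hs4 : 0 ≤ s ^ 4 := by positivity
  refine ⟨h1, ?_, ?_⟩
  · have : exp ((1 + x) * s - log (1 + w s) / 2) * (1 - u s + 3 * u s ^ 2 - 15 * u s ^ 3) = exp (L s) := by
      simp only [hL]
      rw [Real.exp_add, Real.exp_log h2]
      simp only [hm]; ring
    rw [this]
    calc _ = |exp (L s) - 1 - L s + (L s - P s)| := by simp only [hP]; congr 1; ring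
      _ ≤ C1 * s ^ 4 := h3
      _ ≤ _ := by nlinarith
  · exact (le_abs_self _).trans (h4.trans (by nlinarith))

theorem tail_ev (b : ℕ → ℝ)
    (hb : ∀ n : ℕ, 1 ≤ n → 0 < b n ∧ 2 * Real.pi * (b n) ^ 2 * Real.exp ((b n) ^ 2) = (n : ℝ) ^ 2) :
    Tendsto (fun n => 1 / (b n) ^ 2) atTop (𝓝 0) := by
  have h : Tendsto (fun n => (b n) ^ 2) atTop atTop := by
    rw [tendsto_atTop]
    intro M
    have h1 : Tendsto (fun n : ℕ => (n : ℝ) ^ 2) atTop atTop :=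
      (tendsto_pow_atTop two_ne_zero).comp tendsto_natCast_atTop_atTop
    filter_upwards [h1.eventually_gt_atTop (2 * π * M * exp M), eventually_ge_atTop 1] with n hn hn1
    by_contra hlt
    push Not at hlt
    obtain ⟨h2, h3⟩ := hb n hn1
    have : 2 * π * b n ^ 2 * exp (b n ^ 2) ≤ 2 * π * M * exp M := by
      have hM : 0 < M := lt_of_le_of_lt (sq_nonneg _) hlt
      gcongr
    linarith
  refine h.inv_tendsto_atTop.congr fun n => ?_
  simp

theorem inv_n_bound (b : ℝ) (n : ℕ) (hn : 1 ≤ n) (hb : 0 < b)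
    (he : 2 * Real.pi * b ^ 2 * Real.exp (b ^ 2) = (n : ℝ) ^ 2) :
    1 / (n : ℝ) ≤ 71 * (1 / b ^ 2) ^ 4 := by
  have hn0 : (0:ℝ) < n := by exact_mod_cast hn
  have h1 := Real.pow_div_factorial_le_exp (b ^ 2) (by positivity) 7
  have h2 : b ^ 8 ≤ 71 * n := by
    refine (pow_le_pow_iff_left₀ (by positivity) (by positivity) two_ne_zero).1 ?_
    rw [mul_pow, ← he]
    rw [div_le_iff₀ (by positivity)] at h1
    norm_num [Nat.factorial] at h1
    have hpi := Real.pi_gt_three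
    have h3 : 0 < b ^ 2 * exp (b ^ 2) := by positivity
    have h4 : b ^ 2 * (b ^ 2) ^ 7 ≤ b ^ 2 * (exp (b ^ 2) * 5040) := by gcongr
    nlinarith
  rw [show 71 * (1 / b ^ 2) ^ 4 = 71 / b ^ 8 by field_simp, div_le_div_iff₀ hn0 (by positivity)]
  linarith

theorem pow_exp_bound (n : ℕ) (Q : ℝ) (h0 : 0 ≤ Q) (h1 : Q ≤ 1) :
    |(1 - Q) ^ n - exp (-(n * Q))| ≤ n * Q ^ 2 := by
  have h := abs_pow_sub_pow_le (1 - Q) (exp (-Q)) n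
  rw [← Real.exp_nat_mul, show (n : ℝ) * -Q = -(n * Q) by ring] at h
  have h2 := Real.abs_exp_sub_one_sub_id_le (x := -Q) (by rw [abs_neg, abs_of_nonneg h0]; exact h1)
  have h3 : |1 - Q - exp (-Q)| ≤ Q ^ 2 := by
    rw [abs_sub_comm]
    convert h2 using 1
    · congr 1; ring
    · ring
  have h4 : max |1 - Q| |exp (-Q)| ^ (n - 1) ≤ 1 := by
    refine pow_le_one₀ (by positivity) (max_le ?_ ?_)
    · rw [abs_of_nonneg (by linarith)]; linarith
    · rw [abs_of_pos (Real.exp_pos _)]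
      exact Real.exp_le_one_iff.2 (by linarith)
  calc _ ≤ _ := h
    _ ≤ Q ^ 2 * n * 1 := by gcongr
    _ = _ := by ring

/-- Theorem 2.1, `t = 2`: With `b_n` the unique positive solution of
`2π b_n² exp(b_n²) = n²`, `c_n = 2 − 2b_n^{−2}`, `d_n = b_n² − 2b_n^{−2}`,
`h_n = (c_n x + d_n)^{1/2}` and `F_n(x) = Φ(h_n)^n − (1 − Φ(h_n))^n`
(which equals `P(M_n² ≤ c_n x + d_n)`):
`F_n(x) = Λ(x) + b_n^{−4} Λ(x) e^{−x}(k₁ + b_n^{−2} k₂ + O(b_n^{−4}))`, with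
`k₁ = −(7/2 + 3x + x²)` and `k₂ = 43/3 + 14x + 6x² + (4/3)x³`. -/
theorem powered_extremes_df_higher_order_expansion_t_eq_two
    (b : ℕ → ℝ)
    (hb : ∀ n : ℕ, 1 ≤ n → 0 < b n ∧
      2 * Real.pi * (b n) ^ 2 * Real.exp ((b n) ^ 2) = (n : ℝ) ^ 2)
    (x : ℝ)
    (c d h F : ℕ → ℝ)
    (hc : ∀ n : ℕ, c n = 2 - 2 / (b n) ^ 2)
    (hd : ∀ n : ℕ, d n = (b n) ^ 2 - 2 / (b n) ^ 2)
    (hh : ∀ n : ℕ, h n = (c n * x + d n) ^ ((1 : ℝ) / 2))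
    (hF : ∀ n : ℕ, F n = stdNormalCDF (h n) ^ n - (1 - stdNormalCDF (h n)) ^ n) :
    ∃ C > (0 : ℝ), ∃ N : ℕ, ∀ n : ℕ, N ≤ n →
      0 < c n * x + d n ∧
      |F n - gumbel x -
        gumbel x * Real.exp (-x) / (b n) ^ 4 * (-(7 / 2 + 3 * x + x ^ 2)) -
        gumbel x * Real.exp (-x) / (b n) ^ 6 *
          (43 / 3 + 14 * x + 6 * x ^ 2 + 4 / 3 * x ^ 3)|
      ≤ C / (b n) ^ 8 := by
  have hs0 := tail_ev b hb
  set s : ℕ → ℝ := fun n => 1 / (b n) ^ 2 with hs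
  set K : ℝ := 7 / 2 + 3 * x + x ^ 2 with hK
  set k₂ : ℝ := 43 / 3 + 14 * x + 6 * x ^ 2 + 4 / 3 * x ^ 3 with hk₂
  obtain ⟨C, hC, hD⟩ := lemmaD x
  have hev := hs0.eventually hD
  have key : ∀ᶠ n : ℕ in atTop, 0 < c n * x + d n ∧
      |exp x * (n * (1 - stdNormalCDF (h n))) - 1 - (K * s n ^ 2 - k₂ * s n ^ 3)| ≤ 2 * C * s n ^ 4 := by
    filter_upwards [hev, eventually_ge_atTop 1] with n h1 hn1
    obtain ⟨hbp, hbe⟩ := hb n hn1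
    obtain ⟨hW, hm1, hm2⟩ := h1 _ _ rfl rfl
    set W : ℝ := 2 * x * s n - 2 * (1 + x) * s n ^ 2 with hWd
    have hy : c n * x + d n = b n ^ 2 * (1 + W) := by
      rw [hc, hd, hWd]
      simp only [hs]
      field_simp
      ring
    have hyp : 0 < c n * x + d n := by rw [hy]; positivity
    have hhn : h n = √(b n ^ 2 * (1 + W)) := by
      rw [hh, hy, Real.sqrt_eq_rpow]
    have hhp : 0 < h n := by rw [hhn]; exact Real.sqrt_pos.2 (by positivity)
    have hB := exactB (b n) n x (s n) W (h n) hbp (by positivity) hbe rfl hWd hW hhn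
    have hu : (h n)⁻¹ ^ 2 = s n / (1 + W) := by
      rw [inv_pow, hhn, Real.sq_sqrt (by positivity)]
      simp only [hs]
      field_simp
    obtain ⟨ml, mu⟩ := mills (h n) hhp
    rw [show (h n)⁻¹ ^ 4 = ((h n)⁻¹ ^ 2) ^ 2 by ring, show (h n)⁻¹ ^ 6 = ((h n)⁻¹ ^ 2) ^ 3 by ring, hu] at ml mu
    rw [show (h n)⁻¹ ^ 8 = ((h n)⁻¹ ^ 2) ^ 4 by ring, hu] at mu
    refine ⟨hyp, ?_⟩
    set u := s n / (1 + W) with hud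
    set E := exp ((1 + x) * s n - log (1 + W) / 2) with hE
    set p := phi (h n) * (h n)⁻¹ with hp
    set Q := 1 - stdNormalCDF (h n) with hQ
    have hEp : exp x * n * p = E := by
      rw [mul_assoc, hB, ← mul_assoc, ← Real.exp_add]; simp
    have hg : 0 ≤ exp x * n := by positivity
    have ml' := mul_nonneg hg ml
    have mu' := mul_le_mul_of_nonneg_left mu hg
    have e1 : exp x * n * (Q - p * (1 - u + 3 * u ^ 2 - 15 * u ^ 3)) = exp x * (n * Q) - E * (1 - u + 3 * u ^ 2 - 15 * u ^ 3) := by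
      rw [← hEp]; ring
    have e2 : exp x * n * (p * (105 * u ^ 4)) = E * (105 * u ^ 4) := by
      rw [← hEp]; ring
    rw [e1] at ml' mu'
    rw [e2] at mu'
    rw [← hK, ← hk₂] at hm1
    rw [abs_le] at hm1 ⊢
    have : 0 ≤ C * s n ^ 4 := by positivity
    constructor <;> linarith [hm1.1, hm1.2]
  set r : ℕ → ℝ := fun n => n * (1 - stdNormalCDF (h n)) with hr
  set δ : ℕ → ℝ := fun n => exp x * r n - 1 with hδ
  have hδ1 : (fun n => δ n - (K * s n ^ 2 - k₂ * s n ^ 3)) =O[atTop] fun n => s n ^ 4 := by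
    refine IsBigO.of_bound (2 * C) ?_
    filter_upwards [key] with n hn
    rw [Real.norm_eq_abs, Real.norm_eq_abs, abs_of_nonneg (show 0 ≤ s n ^ 4 by positivity)]
    exact hn.2
  have hs1 : s =O[atTop] fun _ => (1:ℝ) := hs0.isBigO_one ℝ
  have hP2 : (fun n => K * s n ^ 2 - k₂ * s n ^ 3) =O[atTop] fun n => s n ^ 2 := by
    have := (isBigO_refl (fun n => s n ^ 2) atTop).mul (((hs0.const_mul k₂).const_sub K).isBigO_one ℝ)
    simp only [mul_one] at this
    exact this.congr_left fun n => by ring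
  have h42 : (fun n => s n ^ 4) =O[atTop] fun n => s n ^ 2 := by
    have := (isBigO_refl (fun n => s n ^ 2) atTop).mul (hs1.pow 2)
    simp only [mul_one, one_pow] at this
    exact this.congr_left fun n => by ring
  have hδ2 : δ =O[atTop] fun n => s n ^ 2 :=
    ((hδ1.trans h42).add hP2).congr_left fun n => by ring
  have hδ0 : Tendsto δ atTop (𝓝 0) := hδ2.trans_tendsto (by simpa using hs0.pow 2)
  have hz0 : Tendsto (fun n => -exp (-x) * δ n) atTop (𝓝 0) := by simpa using hδ0.const_mul (-exp (-x))
  have hexp : (fun n => exp (-exp (-x) * δ n) - 1 - (-exp (-x) * δ n)) =O[atTop] fun n => s n ^ 4 := by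
    have := (exp2.comp_tendsto hz0).trans ((hδ2.const_mul_left (-exp (-x))).pow 2)
    exact this.congr (fun n => rfl) fun n => by ring
  have hrx : ∀ n, r n = exp (-x) * (1 + δ n) := by
    intro n
    simp only [hδ]
    rw [add_sub_cancel, ← mul_assoc, ← Real.exp_add]; simp
  have hmain : (fun n => exp (-r n) - gumbel x - gumbel x * exp (-x) * (-(K * s n ^ 2 - k₂ * s n ^ 3)))
      =O[atTop] fun n => s n ^ 4 := by
    have := (hexp.const_mul_left (gumbel x)).add (hδ1.const_mul_left (-gumbel x * exp (-x)))
    refine this.congr_left fun n => ?_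
    have : exp (-r n) = gumbel x * exp (-exp (-x) * δ n) := by
      rw [hrx, gumbel, ← Real.exp_add]; congr 1; ring
    rw [this]; ring
  have hinv : (fun n : ℕ => 1 / (n : ℝ)) =O[atTop] fun n => s n ^ 4 := by
    refine IsBigO.of_bound 71 ?_
    filter_upwards [eventually_ge_atTop 1] with n hn
    rw [Real.norm_eq_abs, Real.norm_eq_abs, abs_of_nonneg (show 0 ≤ s n ^ 4 by positivity),
      abs_of_nonneg (by positivity)]
    exact inv_n_bound (b n) n hn (hb n hn).1 (hb n hn).2
  have hr1 : r =O[atTop] fun _ => (1:ℝ) := by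
    have : Tendsto r atTop (𝓝 (exp (-x) * (1 + 0))) := by
      rw [show r = fun n => exp (-x) * (1 + δ n) from funext hrx]
      exact (hδ0.const_add 1).const_mul _
    exact this.isBigO_one ℝ
  have hpow : (fun n => stdNormalCDF (h n) ^ n - exp (-r n)) =O[atTop] fun n => s n ^ 4 := by
    have hb1 : (fun n => stdNormalCDF (h n) ^ n - exp (-r n)) =O[atTop] fun n => r n ^ 2 * (1 / (n : ℝ)) := by
      refine IsBigO.of_bound 1 ?_
      filter_upwards [eventually_ge_atTop 1] with n hn
      have hn0 : (0:ℝ) < n := by exact_mod_cast hn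
      have := pow_exp_bound n (1 - stdNormalCDF (h n)) (by linarith [cdf_le_one (h n)]) (by linarith [cdf_nonneg (h n)])
      rw [sub_sub_cancel] at this
      rw [Real.norm_eq_abs, Real.norm_eq_abs, abs_of_nonneg (show 0 ≤ r n ^ 2 * (1 / (n : ℝ)) by positivity), one_mul]
      refine this.trans (le_of_eq ?_)
      simp only [hr]
      field_simp
    refine hb1.trans (((hr1.pow 2).mul hinv).congr_right fun n => ?_)
    ring
  have hQn : (fun n => (1 - stdNormalCDF (h n)) ^ n) =O[atTop] fun n => s n ^ 4 := by
    have hb1 : (fun n => (1 - stdNormalCDF (h n)) ^ n) =O[atTop] fun n => r n * (1 / (n : ℝ)) := by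
      refine IsBigO.of_bound 1 ?_
      filter_upwards [eventually_ge_atTop 1] with n hn
      have hn0 : (0:ℝ) < n := by exact_mod_cast hn
      have hq0 : 0 ≤ 1 - stdNormalCDF (h n) := by linarith [cdf_le_one (h n)]
      have : r n * (1 / (n : ℝ)) = 1 - stdNormalCDF (h n) := by
        simp only [hr]
        field_simp
      rw [this, Real.norm_eq_abs, Real.norm_eq_abs, abs_of_nonneg hq0, abs_of_nonneg (by positivity), one_mul]
      exact pow_le_of_le_one hq0 (by linarith [cdf_nonneg (h n)]) (by omega)
    refine hb1.trans ((hr1.mul hinv).congr_right fun n => ?_)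
    ring
  have hfin := (hmain.add hpow).sub hQn
  obtain ⟨C', hC', hfin⟩ := hfin.exists_pos
  obtain ⟨N, hN⟩ := eventually_atTop.1 (key.and hfin.bound)
  refine ⟨C', hC', N, fun n hn => ?_⟩
  obtain ⟨h1, h2⟩ := hN n hn
  refine ⟨h1.1, ?_⟩
  rw [Real.norm_eq_abs, Real.norm_eq_abs, abs_of_nonneg (show 0 ≤ s n ^ 4 by positivity)] at h2
  have e1 : s n ^ 4 = 1 / b n ^ 8 := by simp only [hs]; rw [div_pow, one_pow, ← pow_mul]
  have e2 : s n ^ 2 = 1 / b n ^ 4 := by simp only [hs]; rw [div_pow, one_pow, ← pow_mul]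
  have e3 : s n ^ 3 = 1 / b n ^ 6 := by simp only [hs]; rw [div_pow, one_pow, ← pow_mul]
  rw [e1, e2, e3] at h2
  rw [hF]
  calc _ = _ := by congr 1; ring
    _ ≤ _ := h2
    _ = _ := by ring
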